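/- Let (α, 𝔄) be a standard Borel space. Then the duplicate-elimination map, which sends a finite multiset D over α to the duplicate-free multiset dedup(D) containing each element of D exactly once (converting a bag instance into a set instance), is measurable with respect to the counting σ-algebra 𝔠 on finite multisets over α, on both domain and codomain. -/

import Mathlib

open MeasureTheory

/- `bagCount F D` is `|D|_F`: the number of elements of the finite bag (multiset) `D`
that lie in the set `F`, counted with multiplicity. -/
open Classical in
noncomputable def bagCount {α : Type*} (F : Set α) (D : Multiset α) : ℕ :=
  Multiset.countP (fun a => a ∈ F) D

/-- The counting event `#(F, n)`: all finite bags `D` with `|D|_F = n`. -/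
def countingEvent {α : Type*} (F : Set α) (n : ℕ) : Set (Multiset α) :=
  {D : Multiset α | bagCount F D = n}

/-- The counting σ-algebra `𝔠` on finite bags (multisets) over a measurable space `α`:
the σ-algebra generated by the counting events `#(F, n)` for measurable `F ⊆ α` and `n ∈ ℕ`. -/
def countingSigmaAlgebra (α : Type*) [MeasurableSpace α] : MeasurableSpace (Multiset α) :=
  MeasurableSpace.generateFrom
    {A : Set (Multiset α) | ∃ (F : Set α) (n : ℕ), MeasurableSet F ∧ A = countingEvent F n}

/-! Filtering a bag by a measurable set and mapping it along a measurable function are measurable,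
and `|dedup D|_F` is the number of distinct elements of `D` filtered by `F`, so it suffices that the
number of distinct elements of a bag depends measurably on the bag. On a finite space this number is
a sum of indicators of the events `a ∈ D`. In general, a measurable injection
`f : α → ℕ → Bool` gives measurable maps `a ↦ (f a 0, …, f a (m - 1))` into finite spaces. For large
`m` such a map is injective on the finitely many elements of a given bag, so the number of distinct
elements is the pointwise limit of the numbers of distinct images. -/

section

variable {α β Ω : Type*}

theorem bagCount_eq_countP (F : Set α) [DecidablePred (· ∈ F)] (D : Multiset α) :
    bagCount F D = D.countP (· ∈ F) := by
  unfold bagCount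
  congr!

theorem bagCount_pos {F : Set α} {D : Multiset α} : 0 < bagCount F D ↔ ∃ a ∈ D, a ∈ F := by
  classical
  rw [bagCount_eq_countP, Multiset.countP_pos]

theorem bagCount_filter (F G : Set α) [DecidablePred (· ∈ F)] (D : Multiset α) :
    bagCount G (D.filter (· ∈ F)) = bagCount (G ∩ F) D := by
  classical
  simp only [bagCount_eq_countP, Multiset.countP_filter, Set.mem_inter_iff]

theorem bagCount_map (g : α → β) (G : Set β) (D : Multiset α) :
    bagCount G (D.map g) = bagCount (g ⁻¹' G) D := by
  classical
  simp only [bagCount_eq_countP, Multiset.countP_map, ← Multiset.countP_eq_card_filter,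
    Set.mem_preimage]

theorem bagCount_dedup [DecidableEq α] (F : Set α) [DecidablePred (· ∈ F)] (D : Multiset α) :
    bagCount F D.dedup = (D.filter (· ∈ F)).dedup.card := by
  rw [bagCount_eq_countP, Multiset.countP_eq_card_filter, ← Multiset.card_toFinset,
    Multiset.toFinset_filter, Finset.card_def, Finset.filter_val, Multiset.toFinset_val]

theorem eventually_injOn_initial_coordinates {f : α → ℕ → β} (hf : Function.Injective f)
    (s : Finset α) : ∀ᶠ m in Filter.atTop, Set.InjOn (fun a (i : Fin m) ↦ f a i) s := by
  simp only [Set.InjOn, Finset.mem_coe, Filter.eventually_all_finset]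
  intro a _ b _
  by_cases hab : a = b
  · exact .of_forall fun _ _ ↦ hab
  · obtain ⟨k, hk⟩ := Function.ne_iff.mp (hf.ne hab)
    filter_upwards [Filter.eventually_gt_atTop k] with m hkm heq
    exact absurd (congrFun heq ⟨k, hkm⟩) hk

theorem card_dedup_map_of_injOn [DecidableEq α] [DecidableEq β] {g : α → β} {D : Multiset α}
    (hg : Set.InjOn g D.toFinset) : (D.map g).dedup.card = D.dedup.card := by
  rw [← Multiset.card_toFinset, Multiset.toFinset_map, Finset.card_image_of_injOn hg,
    Multiset.card_toFinset]

theorem card_dedup_eq_sum [Fintype α] [DecidableEq α] (D : Multiset α) :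
    D.dedup.card = ∑ a, if a ∈ D then 1 else 0 := by
  rw [← Finset.card_filter, ← Multiset.card_toFinset]
  congr 1
  ext a
  simp

attribute [local instance] countingSigmaAlgebra

variable [MeasurableSpace α] [MeasurableSpace β] [MeasurableSpace Ω]

theorem measurable_bagCount {F : Set α} (hF : MeasurableSet F) : Measurable (bagCount F) :=
  measurable_to_countable' fun n ↦ MeasurableSpace.measurableSet_generateFrom ⟨F, n, hF, rfl⟩

theorem measurable_of_measurable_bagCount {f : Ω → Multiset α}
    (hf : ∀ F, MeasurableSet F → Measurable fun ω ↦ bagCount F (f ω)) : Measurable f := by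
  refine measurable_generateFrom ?_
  rintro _ ⟨F, n, hF, rfl⟩
  exact hf F hF (measurableSet_singleton n)

theorem measurable_multiset_filter {F : Set α} [DecidablePred (· ∈ F)] (hF : MeasurableSet F) :
    Measurable fun D : Multiset α ↦ D.filter (· ∈ F) := by
  refine measurable_of_measurable_bagCount fun G hG ↦ ?_
  simp only [bagCount_filter]
  exact measurable_bagCount (hG.inter hF)

theorem measurable_multiset_map {g : α → β} (hg : Measurable g) :
    Measurable (Multiset.map g) := by
  refine measurable_of_measurable_bagCount fun G hG ↦ ?_
  simp only [bagCount_map]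
  exact measurable_bagCount (hg hG)

theorem measurableSet_setOf_mem [MeasurableSingletonClass α] (a : α) :
    MeasurableSet {D : Multiset α | a ∈ D} := by
  have hpos : {D : Multiset α | a ∈ D} = {D | 0 < bagCount {a} D} := by
    ext D
    simp [bagCount_pos]
  rw [hpos]
  exact measurableSet_lt measurable_const (measurable_bagCount (measurableSet_singleton a))

theorem measurable_card_dedup_of_finite [Finite α] [MeasurableSingletonClass α] [DecidableEq α] :
    Measurable fun D : Multiset α ↦ D.dedup.card := by
  cases nonempty_fintype α
  simp only [card_dedup_eq_sum]
  exact Finset.measurable_sum _ fun a _ ↦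
    .ite (measurableSet_setOf_mem a) measurable_const measurable_const

theorem measurable_card_dedup [MeasurableSpace.CountablySeparated α] [DecidableEq α] :
    Measurable fun D : Multiset α ↦ D.dedup.card := by
  obtain ⟨f, hf, hf_inj⟩ := MeasurableSpace.measurable_injection_nat_bool_of_countablySeparated α
  let initial (m : ℕ) (a : α) (i : Fin m) : Bool := f a i
  have measurable_initial (m : ℕ) : Measurable (initial m) :=
    measurable_pi_lambda _ fun i ↦ (measurable_pi_apply (i : ℕ)).comp hf
  refine measurable_of_tendsto_metrizable (f := fun m D ↦ (D.map (initial m)).dedup.card)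
    (fun m ↦ measurable_card_dedup_of_finite.comp (measurable_multiset_map (measurable_initial m)))
    (tendsto_pi_nhds.mpr fun D ↦ tendsto_nhds_of_eventually_eq ?_)
  filter_upwards [eventually_injOn_initial_coordinates hf_inj D.toFinset] with m hm
  exact card_dedup_map_of_injOn hm

theorem measurable_dedup_general [MeasurableSpace.CountablySeparated α] [DecidableEq α] :
    Measurable (Multiset.dedup : Multiset α → Multiset α) := by
  classical
  refine measurable_of_measurable_bagCount fun F hF ↦ ?_
  simp only [bagCount_dedup]
  exact measurable_card_dedup.comp (measurable_multiset_filter hF)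

end

/- **Statement 11.** For a standard Borel space `α`, the duplicate-elimination map,
sending a finite bag `D` over `α` to the duplicate-free bag `D.dedup` containing each
element of `D` exactly once, is measurable w.r.t. the counting σ-algebra on both sides. -/
open Classical in
theorem measurable_dedup {α : Type*} [MeasurableSpace α] [StandardBorelSpace α] :
    @Measurable (Multiset α) (Multiset α) (countingSigmaAlgebra α) (countingSigmaAlgebra α)
      (fun D : Multiset α => D.dedup) := by
  exact measurable_dedup_general
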